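/- Let X ⊆ A^n_k be an arrangement of linear subspaces over a field k, defined by an ideal I ⊆ R = k[x_1,...,x_n], with intersection poset P(X). Then for each i ≥ 0 and j ≥ 0 there is an R-module isomorphism colim^{(i)}_{P(X)} H^j_{[*]}(R) ≅ ⊕_{p : h(p)=j} H^j_{I_p}(R)^{⊕ b_{i,p}}, where b_{i,p} = dim_k H̃_{i-1}(K(>p); k). -/

import Mathlib

/-- Chains of `m` elements of a preorder `P`: strictly increasing `m`-tuples. These are the
`(m-1)`-simplices of the order complex `K(P)`; for `m = 0` there is exactly one (empty) chain. -/
@[reducible] def pchains (P : Type*) [Preorder P] (m : ℕ) : Type _ :=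
  {f : Fin m → P // StrictMono f}

/-- The boundary map of the augmented simplicial chain complex of the order complex of `P`
with coefficients in `M`: the alternating sum over deletions of a vertex.  In degree `0`
this is the augmentation onto `pchains P 0 →₀ M ≃ M`. -/
noncomputable def simpBdry (A : Type*) [CommRing A] (M : Type*) [AddCommGroup M] [Module A M]
    (P : Type*) [Preorder P] (m : ℕ) :
    (pchains P (m + 1) →₀ M) →ₗ[A] (pchains P m →₀ M) :=
  Finsupp.lsum ℕ fun c =>
    ∑ i : Fin (m + 1), ((-1 : A) ^ (i : ℕ)) •
      (Finsupp.lsingle (⟨c.1 ∘ i.succAbove, c.2.comp (Fin.strictMono_succAbove i)⟩ : pchains P m))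

/-- Cycles of the augmented simplicial chain complex (everything in lowest degree). -/
noncomputable def simpCycles (A : Type*) [CommRing A] (M : Type*) [AddCommGroup M] [Module A M]
    (P : Type*) [Preorder P] : (m : ℕ) → Submodule A (pchains P m →₀ M)
  | 0 => ⊤
  | (m + 1) => LinearMap.ker (simpBdry A M P m)

/-- `simpHomology A M P m` is the reduced simplicial homology `H̃_{m-1}(K(P); M)` of the order
complex of `P` with coefficients in the `A`-module `M`, computed from the augmented chain
complex; with this convention `H̃_{-1}(∅; M) = M` (the case `m = 0`, `P = ∅`). -/
@[reducible] noncomputable def simpHomology (A : Type*) [CommRing A] (M : Type*) [AddCommGroup M] [Module A M]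
    (P : Type*) [Preorder P] (m : ℕ) : Type _ :=
  ↥(simpCycles A M P m) ⧸
    (Submodule.comap (simpCycles A M P m).subtype (LinearMap.range (simpBdry A M P m)))

open MvPolynomial DirectSum

/-- The height of an ideal: the infimum of the heights (in the prime spectrum) of the
minimal primes over it. -/
noncomputable def idealHeight {R : Type*} [CommRing R] (I : Ideal R) : ℕ∞ :=
  ⨅ p : {p : Ideal R // p ∈ I.minimalPrimes},
    Order.height (⟨p.1, p.2.1.1⟩ : PrimeSpectrum R)

/-- The local cohomology module `H^r_I(R)` for `R = k[x₁,…,xₙ]`, as a type. -/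
abbrev LC {n : ℕ} (k : Type) [Field k] (I : Ideal (MvPolynomial (Fin n) k)) (r : ℕ) : Type :=
  ((localCohomology I r).obj
    (ModuleCat.of (MvPolynomial (Fin n) k) (MvPolynomial (Fin n) k)))

/-- The underlying family of modules of a diagram over a poset. -/
structure PreDiagram (P : Type) [Preorder P] (A : Type) [CommRing A] where
  obj : P → Type
  acg : ∀ p, AddCommGroup (obj p)
  mod : ∀ p, @Module A (obj p) _ (acg p).toAddCommMonoid

attribute [instance] PreDiagram.acg PreDiagram.mod

/-- A diagram of `A`-modules over a poset `P` (a covariant functor `P → Mod_A`). -/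
structure PDiagram (P : Type) [Preorder P] (A : Type) [CommRing A] extends PreDiagram P A where
  map : ∀ {p q : P}, p ≤ q → (obj p →ₗ[A] obj q)
  map_id : ∀ (p : P) (x : obj p), map (le_refl p) x = x
  map_comp : ∀ {p q r : P} (h₁ : p ≤ q) (h₂ : q ≤ r) (x : obj p),
    map (h₁.trans h₂) x = map h₂ (map h₁ x)

/-- Degree-`m` part of the Roos complex of a diagram `D` over `P`:
`⊕_{p₀ < … < p_m} D(p₀)`. -/
@[reducible] noncomputable def roosC {P : Type} [Preorder P] {A : Type} [CommRing A]
    (D : PDiagram P A) (m : ℕ) : Type :=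
  Π₀ c : pchains P (m + 1), D.obj (c.1 0)

/-- The differential of the Roos complex: on the summand indexed by `p₀ < … < p_{m+1}`, the
alternating sum of the face maps; the `0`-th face is composed with the transition map
`D(p₀ → p₁)` (uniformly realized as `D` applied to `p₀ ≤ (∂ᵢc)₀`). -/
noncomputable def roosBdry {P : Type} [Preorder P] [DecidableEq P] {A : Type} [CommRing A]
    (D : PDiagram P A) (m : ℕ) : roosC D (m + 1) →ₗ[A] roosC D m :=
  DFinsupp.lsum ℕ fun c =>
    ∑ i : Fin (m + 2), ((-1 : A) ^ (i : ℕ)) •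
      ((DFinsupp.lsingle
          (⟨c.1 ∘ i.succAbove, c.2.comp (Fin.strictMono_succAbove i)⟩ : pchains P (m + 1))).comp
        (D.map (c.2.monotone (Fin.zero_le (i.succAbove 0)))))

/-- Cycles of the Roos complex (everything in lowest degree). -/
noncomputable def roosCycles {P : Type} [Preorder P] [DecidableEq P] {A : Type} [CommRing A]
    (D : PDiagram P A) : (m : ℕ) → Submodule A (roosC D m)
  | 0 => ⊤
  | (m + 1) => LinearMap.ker (roosBdry D m)

/-- `roosHomology D m` computes the `m`-th left derived functor of the colimit over `P`
evaluated at the diagram `D`. -/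
@[reducible] noncomputable def roosHomology {P : Type} [Preorder P] [DecidableEq P]
    {A : Type} [CommRing A] (D : PDiagram P A) (m : ℕ) : Type :=
  ↥(roosCycles D m) ⧸
    (Submodule.comap (roosCycles D m).subtype (LinearMap.range (roosBdry D m)))

/-!
Local cohomology of `R` at a prime generated by polynomials of degree at most one lives in the
single degree `h` given by the height: the prime is generated by a regular sequence `f₁, …, f_h`
which is part of a system of affine coordinates, the sequences `f₁ᵗ, …, f_hᵗ` are regular as well,
so that `Extʳ(R/(f₁ᵗ, …, f_hᵗ), R) = 0` for `r ≠ h`, and the ideals `(f₁ᵗ, …, f_hᵗ)` are cofinal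
with the powers of the prime. Hence the diagram `H^j_{[*]}(R)` is concentrated on the antichain
`{p | h(p) = j}`, and its transition maps along strict inequalities vanish. The Roos complex then
splits according to the least element `p` of a chain, and what remains of the chains starting at
`p` is the augmented order complex of `{q | p < q}` with coefficients in `H^j_{I_p}(R)`. Modules
over a field are flat, so the coefficients come out of the homology.
-/

section Subquotients

variable {A X Y H : Type*} [CommRing A] [AddCommGroup X] [Module A X] [AddCommGroup Y] [Module A Y]
  [AddCommMonoid H] [Module A H]

/-- The subquotient `Z / (B ∩ Z)` of `X` is `H` as soon as an injection `j` with image `Z` and a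
surjection `π` onto `H` present it. -/
noncomputable def subquotientEquiv {Z B : Submodule A X} (j : Y →ₗ[A] X) (π : Y →ₗ[A] H)
    (hj : Function.Injective j) (hZ : LinearMap.range j = Z) (hπ : Function.Surjective π)
    (hB : (LinearMap.ker π).map j = B) : (Z ⧸ B.comap Z.subtype) ≃ₗ[A] H :=
  letI : AddCommGroup H := Module.addCommMonoidToAddCommGroup A
  let e : Y ≃ₗ[A] Z := LinearEquiv.ofInjective j hj ≪≫ₗ LinearEquiv.ofEq _ _ hZ
  (Submodule.Quotient.equiv (LinearMap.ker π) (B.comap Z.subtype) e (by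
    subst hZ hB
    ext ⟨_, y, rfl⟩
    simp only [Submodule.mem_map, Submodule.mem_comap, Submodule.subtype_apply, e,
      LinearEquiv.coe_coe, LinearEquiv.trans_apply, Subtype.ext_iff, LinearEquiv.coe_ofEq_apply,
      LinearEquiv.ofInjective_apply])).symm ≪≫ₗ
    π.quotKerEquivOfSurjective hπ

end Subquotients

section DirectSums

variable {A ι X : Type*} {C C' : ι → Type*} [CommRing A]
  [AddCommGroup X] [Module A X] [∀ p, AddCommGroup (C p)] [∀ p, Module A (C p)]
  [∀ p, AddCommGroup (C' p)] [∀ p, Module A (C' p)]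

/-- The submodule `⨁ p, Z p` of `⨁ p, C p`. -/
def directSumSubmodule (Z : ∀ p, Submodule A (C p)) : Submodule A (⨁ p, C p) :=
  (Submodule.pi Set.univ Z).comap (DirectSum.coeFnLinearMap A)

lemma directSumSubmodule_top : directSumSubmodule (fun p => (⊤ : Submodule A (C p))) = ⊤ := by
  rw [directSumSubmodule, Submodule.pi_top, Submodule.comap_top]

lemma range_lmap_subtype (Z : ∀ p, Submodule A (C p)) :
    LinearMap.range (DirectSum.lmap fun p => (Z p).subtype) = directSumSubmodule Z := by
  simp only [DirectSum.range_lmap, Submodule.range_subtype, directSumSubmodule]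

lemma map_lmap_directSumSubmodule (f : ∀ p, C p →ₗ[A] C' p) (Z : ∀ p, Submodule A (C p)) :
    (directSumSubmodule Z).map (DirectSum.lmap f) =
      directSumSubmodule fun p => (Z p).map (f p) := by
  rw [← range_lmap_subtype, ← LinearMap.range_comp, ← DirectSum.lmap_comp, DirectSum.range_lmap]
  simp only [LinearMap.range_comp, Submodule.range_subtype, directSumSubmodule]

lemma map_subtype_ker_lmap_mkQ {Z B : ∀ p, Submodule A (C p)} (hBZ : ∀ p, B p ≤ Z p) :
    (LinearMap.ker (DirectSum.lmap fun p => ((B p).comap (Z p).subtype).mkQ)).map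
      (DirectSum.lmap fun p => (Z p).subtype) = directSumSubmodule B := by
  rw [DirectSum.ker_lmap, ← directSumSubmodule, map_lmap_directSumSubmodule]
  simp only [Submodule.ker_mkQ, Submodule.map_comap_subtype, inf_eq_right.2 (hBZ _)]

/-- Subquotients commute with direct sums; the ambient direct sum is transported along `e` to `X`,
in which the subquotient is formed. -/
noncomputable def subquotientDirectSumEquiv {Z B : ∀ p, Submodule A (C p)} (hBZ : ∀ p, B p ≤ Z p)
    (e : (⨁ p, C p) ≃ₗ[A] X) {Z' B' : Submodule A X}
    (hZ : (directSumSubmodule Z).map e.toLinearMap = Z')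
    (hB : (directSumSubmodule B).map e.toLinearMap = B') :
    (Z' ⧸ B'.comap Z'.subtype) ≃ₗ[A] ⨁ p, (Z p ⧸ (B p).comap (Z p).subtype) :=
  subquotientEquiv (e.toLinearMap ∘ₗ DirectSum.lmap fun p => (Z p).subtype)
    (DirectSum.lmap fun p => ((B p).comap (Z p).subtype).mkQ)
    (e.injective.comp ((DirectSum.lmap_injective _).2 fun p => (Z p).subtype_injective))
    (by rw [LinearMap.range_comp, range_lmap_subtype, hZ])
    ((DirectSum.lmap_surjective _).2 fun _ => Submodule.mkQ_surjective _)
    (by rw [Submodule.map_comp, map_subtype_ker_lmap_mkQ hBZ, hB])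

variable (A) {N : ι → Type*} [∀ p, AddCommMonoid (N p)] [∀ p, Module A (N p)]

open Classical in
lemma subtypeDomainLinearMap_surjective (T : ι → Prop) :
    Function.Surjective (DFinsupp.subtypeDomainLinearMap A N T) := by
  have right_inverse : DFinsupp.subtypeDomainLinearMap A N T ∘ₗ
      DirectSum.toModule A {p // T p} _ (fun p => DirectSum.lof A ι N p) = LinearMap.id := by
    refine DirectSum.linearMap_ext A fun p => LinearMap.ext fun x => DFinsupp.ext fun q => ?_
    rw [LinearMap.comp_apply, LinearMap.comp_apply, DirectSum.toModule_lof, LinearMap.id_comp]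
    change (DFinsupp.single p.1 x : Π₀ r, N r) q.1 =
      (DFinsupp.single p x : Π₀ r : {r // T r}, N r) q
    obtain rfl | hpq := eq_or_ne p q
    · rw [DFinsupp.single_eq_same, DFinsupp.single_eq_same]
    · rw [DFinsupp.single_eq_of_ne hpq.symm,
        DFinsupp.single_eq_of_ne (Subtype.coe_injective.ne hpq.symm)]
  exact fun x => ⟨_, LinearMap.congr_fun right_inverse x⟩

variable {T : ι → Prop}

open Classical in
lemma subtypeDomainLinearMap_injective (hN : ∀ p, ¬ T p → Subsingleton (N p)) :
    Function.Injective (DFinsupp.subtypeDomainLinearMap A N T) := fun _ _ h => DFinsupp.ext fun p =>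
  if hp : T p then DFunLike.congr_fun h (⟨p, hp⟩ : {p // T p}) else (hN p hp).elim _ _

open Classical in
/-- Summands that vanish may be dropped from a direct sum. -/
noncomputable def directSumSubtypeEquiv (hN : ∀ p, ¬ T p → Subsingleton (N p)) :
    (⨁ p, N p) ≃ₗ[A] ⨁ p : {p // T p}, N p :=
  LinearEquiv.ofBijective (DFinsupp.subtypeDomainLinearMap A N T)
    ⟨subtypeDomainLinearMap_injective A hN, subtypeDomainLinearMap_surjective A T⟩

end DirectSums

section TensorProducts

open TensorProduct TensorProduct.AlgebraTensorModule

variable {k A M C C' X : Type*} [CommRing k] [CommRing A] [Algebra k A]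
  [AddCommGroup M] [Module k M] [Module A M] [IsScalarTower k A M]
  [AddCommGroup C] [Module k C] [AddCommGroup C'] [Module k C'] [AddCommGroup X] [Module A X]

variable (A M) in
/-- The image of `M ⊗ Z` in `M ⊗ C`, for a submodule `Z` of `C`. -/
def tensorSubmodule (Z : Submodule k C) : Submodule A (M ⊗[k] C) :=
  LinearMap.range (lTensor A M Z.subtype)

lemma tensorSubmodule_range (f : C →ₗ[k] C') :
    tensorSubmodule A M (LinearMap.range f) = LinearMap.range (lTensor A M f) := by
  have hf : f = (LinearMap.range f).subtype ∘ₗ f.rangeRestrict := rfl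
  conv_rhs => rw [hf, lTensor_comp]
  have surjective := LinearMap.lTensor_surjective M f.surjective_rangeRestrict
  rw [LinearMap.range_comp_of_range_eq_top (lTensor A M (LinearMap.range f).subtype)
    (f := lTensor A M f.rangeRestrict) (LinearMap.range_eq_top.2 surjective), tensorSubmodule]

lemma tensorSubmodule_top : tensorSubmodule A M (⊤ : Submodule k C) = ⊤ := by
  rw [← LinearMap.range_id, tensorSubmodule_range, lTensor_id, LinearMap.range_id]

lemma tensorSubmodule_ker [Module.Flat k M] (f : C →ₗ[k] C') :
    tensorSubmodule A M (LinearMap.ker f) = LinearMap.ker (lTensor A M f) :=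
  SetLike.coe_injective <| Eq.symm <| Set.ext
    (Module.Flat.lTensor_exact M f.exact_subtype_ker_map)

lemma map_lTensor_tensorSubmodule (f : C →ₗ[k] C') (Z : Submodule k C) :
    (tensorSubmodule A M Z).map (lTensor A M f) = tensorSubmodule A M (Z.map f) := by
  rw [tensorSubmodule, ← LinearMap.range_comp, ← lTensor_comp, ← tensorSubmodule_range,
    LinearMap.range_comp, Submodule.range_subtype]

lemma map_subtype_ker_lTensor_mkQ {Z B : Submodule k C} (hBZ : B ≤ Z) :
    (LinearMap.ker (lTensor A M (B.comap Z.subtype).mkQ)).map (lTensor A M Z.subtype) =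
      tensorSubmodule A M B := by
  have h : LinearMap.ker (lTensor A M (B.comap Z.subtype).mkQ) =
      tensorSubmodule A M (B.comap Z.subtype) :=
    SetLike.ext fun x => SetLike.ext_iff.1 (lTensor_mkQ M (B.comap Z.subtype)) x
  rw [h, map_lTensor_tensorSubmodule, Submodule.map_comap_subtype, inf_eq_right.2 hBZ]

/-- Subquotients commute with tensoring by a flat module; the ambient tensor product is transported
along `e` to `X`, in which the subquotient is formed. -/
noncomputable def subquotientTensorEquiv [Module.Flat k M] {Z B : Submodule k C} (hBZ : B ≤ Z)
    (e : M ⊗[k] C ≃ₗ[A] X) {Z' B' : Submodule A X}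
    (hZ : (tensorSubmodule A M Z).map e.toLinearMap = Z')
    (hB : (tensorSubmodule A M B).map e.toLinearMap = B') :
    (Z' ⧸ B'.comap Z'.subtype) ≃ₗ[A] M ⊗[k] (Z ⧸ B.comap Z.subtype) :=
  subquotientEquiv (e.toLinearMap ∘ₗ lTensor A M Z.subtype)
    (lTensor A M (B.comap Z.subtype).mkQ)
    (e.injective.comp (Module.Flat.lTensor_preserves_injective_linearMap _ Z.subtype_injective))
    (by rw [LinearMap.range_comp, ← tensorSubmodule, hZ])
    (LinearMap.lTensor_surjective M (Submodule.mkQ_surjective _))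
    (by rw [Submodule.map_comp, map_subtype_ker_lTensor_mkQ hBZ, hB])

end TensorProducts

section OrderComplex

variable {A M Q : Type*} [CommRing A] [AddCommGroup M] [Module A M] [Preorder Q]

/-- The face of a chain opposite to its `i`-th vertex. -/
abbrev chainFace {m : ℕ} (c : pchains Q (m + 1)) (i : Fin (m + 1)) : pchains Q m :=
  ⟨c.1 ∘ i.succAbove, c.2.comp (Fin.strictMono_succAbove i)⟩

lemma simpBdry_single {m : ℕ} (c : pchains Q (m + 1)) (x : M) :
    simpBdry A M Q m (Finsupp.single c x) =
      ∑ i : Fin (m + 1), (-1 : A) ^ (i : ℕ) • Finsupp.single (chainFace c i) x := by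
  rw [simpBdry, Finsupp.lsum_single, LinearMap.sum_apply]
  rfl

lemma chainFace_chainFace {m : ℕ} (c : pchains Q (m + 2)) (i : Fin (m + 2)) (j : Fin (m + 1)) :
    chainFace (chainFace c (i.succAbove j)) (j.predAbove i) = chainFace (chainFace c i) j :=
  Subtype.ext <| funext fun l =>
    congrArg c.1 (Fin.succAbove_succAbove_succAbove_predAbove i j l)

lemma simpBdry_comp_simpBdry (m : ℕ) :
    simpBdry A M Q m ∘ₗ simpBdry A M Q (m + 1) = 0 := by
  refine Finsupp.lhom_ext fun c x => ?_
  simp only [LinearMap.comp_apply, LinearMap.zero_apply, simpBdry_single, map_sum, map_smul,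
    Finset.smul_sum, smul_smul, ← pow_add]
  rw [← Finset.sum_product']
  refine Finset.sum_involution (fun ij _ => (ij.1.succAbove ij.2, ij.2.predAbove ij.1))
    ?cancel ?fixedPointFree ?mem ?involutive
  case cancel =>
    rintro ⟨i, j⟩ -
    simp only [chainFace_chainFace]
    rw [Fin.neg_one_pow_succAbove_add_predAbove, neg_smul, add_neg_cancel]
  case fixedPointFree =>
    rintro ⟨i, j⟩ - - h
    exact Fin.succAbove_ne i j (congrArg Prod.fst h)
  case mem => simp
  case involutive =>
    rintro ⟨i, j⟩ -
    simp only [Fin.succAbove_succAbove_predAbove, Fin.predAbove_predAbove_succAbove]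

lemma range_simpBdry_le_simpCycles (m : ℕ) :
    LinearMap.range (simpBdry A M Q m) ≤ simpCycles A M Q m := by
  cases m with
  | zero => exact le_top
  | succ m => exact LinearMap.range_le_ker_iff.2 (simpBdry_comp_simpBdry m)

end OrderComplex

section RoosComplex

variable {A P : Type} [CommRing A] [Preorder P]

/-- The chain `p < c₀ < ⋯` obtained by putting `p` below a chain of elements above `p`. -/
def chainCons (p : P) {m : ℕ} (c : pchains {q : P // p < q} m) : pchains P (m + 1) :=
  ⟨Fin.cons p fun i => (c.1 i).1, Fin.strictMono_cons.2 ⟨fun i => (c.1 i).2, c.2⟩⟩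

/-- The part `c₁ < c₂ < ⋯` of a chain above its least element `c₀`. -/
def chainTail {m : ℕ} (c : pchains P (m + 1)) : pchains {q : P // c.1 0 < q} m :=
  ⟨fun i => ⟨c.1 i.succ, c.2 (Fin.succ_pos i)⟩, fun _ _ h => c.2 (Fin.succ_lt_succ_iff.2 h)⟩

lemma le_chainCons_zero (p : P) {m : ℕ} (c : pchains {q : P // p < q} m) :
    p ≤ (chainCons p c).1 0 := le_rfl

lemma chainCons_chainTail {m : ℕ} (c : pchains P (m + 1)) : chainCons (c.1 0) (chainTail c) = c :=
  Subtype.ext (Fin.cons_self_tail c.1)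

lemma chainFace_chainCons_succ (p : P) {m : ℕ} (c : pchains {q : P // p < q} (m + 1))
    (i : Fin (m + 1)) : chainFace (chainCons p c) i.succ = chainCons p (chainFace c i) := by
  refine Subtype.ext (funext fun l => ?_)
  cases l using Fin.cases <;> simp [chainCons]

variable [DecidableEq P] (D : PDiagram P A) {m : ℕ}

/-- The inclusion of the `c`-th summand of the Roos complex, precomposed with a transition map to
`D.obj (c₀)`. -/
noncomputable def roosSingle (c : pchains P (m + 1)) {p : P} (h : p ≤ c.1 0) :
    D.obj p →ₗ[A] roosC D m :=
  DFinsupp.lsingle (M := fun c : pchains P (m + 1) => D.obj (c.1 0)) c ∘ₗ D.map h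

variable {D}

lemma roosSingle_congr {c c' : pchains P (m + 1)} (hc : c = c') {p : P} (h : p ≤ c.1 0) :
    roosSingle D c h = roosSingle D c' (hc ▸ h) := by
  subst hc; rfl

lemma roosSingle_le_rfl (c : pchains P (m + 1)) (x : D.obj (c.1 0)) :
    roosSingle D c le_rfl x = DFinsupp.single c x :=
  congrArg (DFinsupp.single c) (D.map_id _ x)

lemma roosBdry_roosSingle (c : pchains P (m + 2)) {p : P} (h : p ≤ c.1 0) (x : D.obj p) :
    roosBdry D m (roosSingle D c h x) = ∑ i : Fin (m + 2), (-1 : A) ^ (i : ℕ) •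
      roosSingle D (chainFace c i) (h.trans (c.2.monotone (Fin.zero_le (i.succAbove 0)))) x := by
  simp only [roosBdry, roosSingle, LinearMap.comp_apply, DFinsupp.lsingle_apply,
    DFinsupp.lsum_single, LinearMap.sum_apply, LinearMap.smul_apply, ← D.map_comp]

variable (D m)

/-- Sorting the chains by their least element identifies the Roos complex, as a graded module,
with the direct sum over `p` of the chains of the order complex of `{q > p}` with coefficients in
`D.obj p`. -/
noncomputable def roosEquiv :
    (⨁ p : P, (pchains {q : P // p < q} m →₀ D.obj p)) ≃ₗ[A] roosC D m :=
  LinearEquiv.ofLinearMap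
    (DirectSum.toModule A P _ fun p => Finsupp.lsum ℕ fun c =>
      roosSingle D (chainCons p c) (le_chainCons_zero p c))
    (DFinsupp.lsum ℕ fun c =>
      DirectSum.lof A P (fun p => pchains {q : P // p < q} m →₀ D.obj p) (c.1 0) ∘ₗ
        Finsupp.lsingle (chainTail c))
    (DFinsupp.lhom_ext fun c x => by
      simp only [LinearMap.comp_apply, DFinsupp.lsum_single, DirectSum.toModule_lof,
        Finsupp.lsingle_apply, Finsupp.lsum_single, LinearMap.id_apply]
      rw [roosSingle_congr (chainCons_chainTail c), roosSingle_le_rfl])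
    (DirectSum.linearMap_ext A fun p => Finsupp.lhom_ext fun c x => by
      simp only [LinearMap.comp_apply, DirectSum.toModule_lof, Finsupp.lsum_single,
        LinearMap.id_apply, roosSingle, DFinsupp.lsingle_apply, DFinsupp.lsum_single]
      exact congrArg (fun y => DirectSum.lof A P
        (fun p => pchains {q : P // p < q} m →₀ D.obj p) p (Finsupp.single c y)) (D.map_id p x))

lemma roosEquiv_lof_single (p : P) (c : pchains {q : P // p < q} m) (x : D.obj p) :
    roosEquiv D m (DirectSum.lof A P (fun p => pchains {q : P // p < q} m →₀ D.obj p) p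
      (Finsupp.single c x)) = roosSingle D (chainCons p c) (le_chainCons_zero p c) x := by
  rw [roosEquiv, LinearEquiv.coe_ofLinearMap, DirectSum.toModule_lof, Finsupp.lsum_single]

variable {D} (hD : ∀ {p q : P} (h : p < q), D.map h.le = 0)
include hD

lemma roosSingle_eq_zero_of_lt (c : pchains P (m + 1)) {p : P} (h : p < c.1 0) :
    roosSingle D c h.le = 0 := by
  rw [roosSingle, hD h, LinearMap.comp_zero]

lemma roosBdry_roosEquiv :
    roosBdry D m ∘ₗ (roosEquiv D (m + 1)).toLinearMap = (roosEquiv D m).toLinearMap ∘ₗ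
      (-DirectSum.lmap fun p => simpBdry A (D.obj p) {q : P // p < q} m) := by
  refine DirectSum.linearMap_ext A fun p => Finsupp.lhom_ext fun c x => ?_
  -- the face omitting `p` dies in the Roos complex, so all other faces are shifted by one sign
  have face_zero (h : p ≤ (chainFace (chainCons p c) 0).1 0) :
      roosSingle D (chainFace (chainCons p c) 0) h = 0 :=
    roosSingle_eq_zero_of_lt m hD _ (c.1 0).2
  simp only [LinearMap.comp_apply, LinearMap.neg_apply, DirectSum.lmap_lof, LinearEquiv.coe_coe,
    roosEquiv_lof_single, roosBdry_roosSingle, simpBdry_single, map_neg, map_sum, map_smul]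
  rw [Fin.sum_univ_succ, ← Finset.sum_neg_distrib, face_zero, LinearMap.zero_apply, smul_zero,
    zero_add]
  refine Finset.sum_congr rfl fun i _ => ?_
  rw [Fin.val_succ, pow_succ, mul_neg_one, neg_smul,
    roosSingle_congr (chainFace_chainCons_succ p c i)]

lemma map_roosEquiv_range_simpBdry :
    (directSumSubmodule fun p => LinearMap.range (simpBdry A (D.obj p) {q : P // p < q} m)).map
      (roosEquiv D m).toLinearMap = LinearMap.range (roosBdry D m) := by
  rw [directSumSubmodule, ← DirectSum.range_lmap, ← LinearMap.range_neg, ← LinearMap.range_comp,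
    ← roosBdry_roosEquiv m hD, LinearMap.range_comp_of_range_eq_top _ (LinearEquiv.range _)]

lemma map_roosEquiv_simpCycles :
    (directSumSubmodule fun p => simpCycles A (D.obj p) {q : P // p < q} m).map
      (roosEquiv D m).toLinearMap = roosCycles D m := by
  cases m with
  | zero =>
    simp only [simpCycles, roosCycles, directSumSubmodule_top, Submodule.map_top,
      LinearEquiv.range]
  | succ m =>
    simp only [simpCycles, roosCycles]
    rw [directSumSubmodule, ← DirectSum.ker_lmap, ← LinearMap.ker_neg,
      ← LinearEquiv.ker_comp (roosEquiv D m), ← roosBdry_roosEquiv m hD, LinearMap.ker_comp,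
      Submodule.map_comap_eq_of_surjective (roosEquiv D _).surjective]

/-- If all transition maps along strict inequalities vanish, the Roos complex is the direct sum of
the order complexes of the posets `{q > p}` with coefficients in `D.obj p`. -/
noncomputable def roosHomologyEquiv :
    roosHomology D m ≃ₗ[A] ⨁ p : P, simpHomology A (D.obj p) {q : P // p < q} m :=
  subquotientDirectSumEquiv (fun _ => range_simpBdry_le_simpCycles m) (roosEquiv D m)
    (map_roosEquiv_simpCycles m hD) (map_roosEquiv_range_simpBdry m hD)
end RoosComplex

section UniversalCoefficients

open TensorProduct TensorProduct.AlgebraTensorModule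

variable (k A M Q : Type*) [CommRing k] [CommRing A] [Algebra k A]
  [AddCommGroup M] [Module k M] [Module A M] [IsScalarTower k A M] [Preorder Q] (m : ℕ)

open Classical in
lemma simpBdry_finsuppScalarRight :
    simpBdry A M Q m ∘ₗ (finsuppScalarRight k A M (pchains Q (m + 1))).toLinearMap =
      (finsuppScalarRight k A M (pchains Q m)).toLinearMap ∘ₗ lTensor A M (simpBdry k k Q m) := by
  refine TensorProduct.AlgebraTensorModule.ext fun x c => ?_
  induction c using Finsupp.induction_linear with
  | zero => simp only [TensorProduct.tmul_zero, map_zero]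
  | add c d hc hd => simp only [TensorProduct.tmul_add, map_add, hc, hd]
  | single c r =>
    have sign_smul (i : ℕ) (y : M ⊗[k] (pchains Q m →₀ k)) :
        (-1 : k) ^ i • y = (-1 : A) ^ i • y := by
      rw [← algebraMap_smul A, map_pow, map_neg, map_one]
    have single_tmul {m : ℕ} (c : pchains Q m) :
        finsuppScalarRight k A M (pchains Q m) (x ⊗ₜ Finsupp.single c r) =
          Finsupp.single c (r • x) := by
      rw [finsuppScalarRight_apply_tmul, Finsupp.sum_single_index (by simp)]
    change simpBdry A M Q m (finsuppScalarRight k A M _ (x ⊗ₜ _)) =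
      finsuppScalarRight k A M _ (x ⊗ₜ simpBdry k k Q m _)
    simp only [single_tmul, simpBdry_single, TensorProduct.tmul_sum, TensorProduct.tmul_smul,
      sign_smul, map_sum, map_smul]

open Classical in
lemma map_finsuppScalarRight_range_simpBdry :
    (tensorSubmodule A M (LinearMap.range (simpBdry k k Q m))).map
      (finsuppScalarRight k A M (pchains Q m)).toLinearMap =
        LinearMap.range (simpBdry A M Q m) := by
  rw [tensorSubmodule_range, ← LinearMap.range_comp, ← simpBdry_finsuppScalarRight,
    LinearMap.range_comp_of_range_eq_top _ (LinearEquiv.range _)]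

open Classical in
lemma map_finsuppScalarRight_simpCycles [Module.Flat k M] :
    (tensorSubmodule A M (simpCycles k k Q m)).map
      (finsuppScalarRight k A M (pchains Q m)).toLinearMap = simpCycles A M Q m := by
  cases m with
  | zero => simp only [simpCycles, tensorSubmodule_top, Submodule.map_top, LinearEquiv.range]
  | succ m =>
    simp only [simpCycles]
    rw [tensorSubmodule_ker, ← LinearEquiv.ker_comp (finsuppScalarRight k A M (pchains Q m)),
      ← simpBdry_finsuppScalarRight, LinearMap.ker_comp,
      Submodule.map_comap_eq_of_surjective (finsuppScalarRight k A M _).surjective]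

open Classical in
/-- Universal coefficients for a flat module of coefficients. -/
noncomputable def simpHomologyTensorEquiv [Module.Flat k M] :
    simpHomology A M Q m ≃ₗ[A] M ⊗[k] simpHomology k k Q m :=
  subquotientTensorEquiv (range_simpBdry_le_simpCycles m)
    (finsuppScalarRight k A M (pchains Q m)) (map_finsuppScalarRight_simpCycles k A M Q m)
    (map_finsuppScalarRight_range_simpBdry k A M Q m)

variable {k}

open Classical in
/-- `H̃_{m-1}(K(Q); M)` is a direct sum of copies of `M`, one for each element of a basis of
`H̃_{m-1}(K(Q); k)`. -/
noncomputable def simpHomologyEquivFinsupp [Module.Flat k M] {β : Type*}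
    (b : Module.Basis β k (simpHomology k k Q m)) : simpHomology A M Q m ≃ₗ[A] (β →₀ M) :=
  simpHomologyTensorEquiv k A M Q m ≪≫ₗ congr (LinearEquiv.refl A M) b.repr ≪≫ₗ
    finsuppScalarRight k A M β

end UniversalCoefficients

section RegularSequences

open RingTheory.Sequence Pointwise

variable {R : Type*} [CommRing R]

lemma isWeaklyRegular_of_exact {M₁ M₂ M₃ : Type*} [AddCommGroup M₁] [Module R M₁]
    [AddCommGroup M₂] [Module R M₂] [AddCommGroup M₃] [Module R M₃] {f : M₁ →ₗ[R] M₂}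
    {g : M₂ →ₗ[R] M₃} (hf : Function.Injective f) (hfg : Function.Exact f g)
    (hg : Function.Surjective g) {rs : List R} (h₁ : IsWeaklyRegular M₁ rs)
    (h₃ : IsWeaklyRegular M₃ rs) : IsWeaklyRegular M₂ rs := by
  induction rs generalizing M₁ M₂ M₃ with
  | nil => exact .nil R M₂
  | cons x rs ih =>
    rw [isWeaklyRegular_cons_iff] at h₁ h₃ ⊢
    refine ⟨isSMulRegular_of_range_eq_ker hf (LinearMap.exact_iff.1 hfg).symm h₁.1 h₃.1,
      ih ?_ (QuotSMulTop.map_exact x hfg hg) (QuotSMulTop.map_surjective x hg) h₁.2 h₃.2⟩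
    have zero_exact : Function.Exact (0 : M₁ →ₗ[R] M₁) f :=
      LinearMap.exact_zero_iff_injective M₁ f |>.2 hf
    have := QuotSMulTop.map_first_exact_on_four_term_exact_of_isSMulRegular_last zero_exact hfg h₃.1
    rwa [map_zero, LinearMap.exact_zero_iff_injective] at this

variable {M : Type*} [AddCommGroup M] [Module R M]

lemma isWeaklyRegular_of_subsingleton [Subsingleton M] (rs : List R) : IsWeaklyRegular M rs := by
  induction rs generalizing M with
  | nil => exact .nil R M
  | cons x rs ih => exact .cons (fun _ _ _ => Subsingleton.elim _ _) ih

lemma isWeaklyRegular_mul_cons {x y : R} {rs : List R} (hx : IsWeaklyRegular M (x :: rs))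
    (hy : IsWeaklyRegular M (y :: rs)) : IsWeaklyRegular M (x * y :: rs) := by
  rw [isWeaklyRegular_cons_iff] at hx hy ⊢
  refine ⟨hx.1.mul hy.1, ?_⟩
  have mem_comap (m : M) : y • m ∈ (x * y) • (⊤ : Submodule R M) ↔ m ∈ x • (⊤ : Submodule R M) := by
    simp only [Submodule.mem_smul_pointwise_iff_exists, Submodule.mem_top, true_and]
    exact exists_congr fun b => by rw [mul_comm, mul_smul, hy.1.eq_iff]
  have mul_le : (x * y) • (⊤ : Submodule R M) ≤ y • ⊤ := by
    rw [mul_comm, mul_smul]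
    exact smul_mono_right y le_top
  -- multiplication by `y` makes `0 → M/xM → M/xyM → M/yM → 0` exact
  let f : QuotSMulTop x M →ₗ[R] QuotSMulTop (x * y) M :=
    Submodule.mapQ _ _ (LinearMap.lsmul R M y) fun m hm => (mem_comap m).2 hm
  let g : QuotSMulTop (x * y) M →ₗ[R] QuotSMulTop y M := Submodule.factor mul_le
  have hf : Function.Injective f := by
    refine LinearMap.ker_eq_bot.1 (Submodule.ker_liftQ_eq_bot _ _ _ fun m hm => ?_)
    exact (mem_comap m).1 ((Submodule.Quotient.mk_eq_zero _).1 hm)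
  have hfg : Function.Exact f g := by
    have range_lsmul : (LinearMap.lsmul R M y).range = y • ⊤ := LinearMap.range_eq_map _
    refine LinearMap.exact_iff.2 ((Submodule.ker_mapQ ..).trans (Eq.trans ?_
      (Submodule.range_mapQ ..).symm))
    rw [Submodule.comap_id, range_lsmul]
  exact isWeaklyRegular_of_exact hf hfg (Submodule.factor_surjective mul_le) hx.2 hy.2

lemma isWeaklyRegular_pow_cons {x : R} {rs : List R} (h : IsWeaklyRegular M (x :: rs)) (t : ℕ) :
    IsWeaklyRegular M (x ^ t :: rs) := by
  induction t with
  | zero =>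
    have : Subsingleton (QuotSMulTop (x ^ 0) M) := by
      rw [pow_zero, Submodule.Quotient.subsingleton_iff, one_smul]
    exact .cons (pow_zero x ▸ .one M) (isWeaklyRegular_of_subsingleton rs)
  | succ t ih => exact pow_succ x t ▸ isWeaklyRegular_mul_cons ih h

lemma isWeaklyRegular_map_pow {rs : List R} (h : IsWeaklyRegular M rs) (t : ℕ) :
    IsWeaklyRegular M (rs.map (· ^ t)) := by
  induction rs generalizing M with
  | nil => exact .nil R M
  | cons x rs ih =>
    obtain ⟨hx, hrs⟩ := (isWeaklyRegular_cons_iff M x rs).1 h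
    exact isWeaklyRegular_pow_cons (.cons hx (ih hrs)) t

end RegularSequences

section LocalCohomology

open CategoryTheory Limits Opposite RingTheory.Sequence localCohomology

universe u v

lemma isZero_ext_obj_obj {A : Type*} [Ring A] {𝒞 : Type u} [Category.{v} 𝒞] [Abelian 𝒞]
    [Linear A 𝒞] [EnoughProjectives 𝒞] [HasExt.{v} 𝒞] (X Y : 𝒞) (r : ℕ)
    [Subsingleton (Abelian.Ext X Y r)] : IsZero (((Ext A 𝒞 r).obj (op X)).obj Y) := by
  let Q := projectiveResolution X
  refine IsZero.of_iso ?_ (Q.isoExt r Y)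
  rw [← HomologicalComplex.exactAt_iff_isZero_homology]
  cases r with
  | zero =>
    rw [HomologicalComplex.exactAt_iff' _ 0 0 1 (by simp) (by simp),
      ShortComplex.moduleCat_exact_iff]
    intro (f : Q.complex.X 0 ⟶ Y) (hf : Q.complex.d 1 0 ≫ f = 0)
    have : Subsingleton (X ⟶ Y) := Abelian.Ext.homEquiv₀.symm.subsingleton
    obtain ⟨g, rfl⟩ : ∃ g : X ⟶ Y, Q.π.f 0 ≫ g = f := ⟨Q.exact₀.desc f hf, Q.exact₀.g_desc f hf⟩
    obtain rfl : g = 0 := Subsingleton.elim _ _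
    exact ⟨0, (map_zero _).trans comp_zero.symm⟩
  | succ r =>
    rw [HomologicalComplex.exactAt_iff' _ r (r + 1) (r + 2) (by simp) (by simp),
      ShortComplex.moduleCat_exact_iff]
    intro (f : Q.complex.X (r + 1) ⟶ Y) (hf : Q.complex.d (r + 2) (r + 1) ≫ f = 0)
    exact (Q.extMk_eq_zero_iff f (r + 2) rfl hf r rfl).1 (Subsingleton.elim _ _)

lemma isZero_colimit_of_forall_exists_map_eq_zero {J 𝒞 : Type*} [Category* J] [Category* 𝒞]
    [HasZeroMorphisms 𝒞] (F : J ⥤ 𝒞) [HasColimit F]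
    (h : ∀ j, ∃ (j' : J) (f : j ⟶ j'), F.map f = 0) : IsZero (colimit F) := by
  refine (IsZero.iff_id_eq_zero _).2 (colimit.hom_ext fun j => ?_)
  obtain ⟨j', f, hf⟩ := h j
  rw [← colimit.w F f, hf, zero_comp, zero_comp, zero_comp]

variable {R : Type u} [CommRing R]

lemma isZero_localCohomology_obj {I : Ideal R} {N : ModuleCat.{u} R} {r : ℕ}
    (h : ∀ s, ∃ J ≤ I ^ s, (∃ t, I ^ t ≤ J) ∧
      Subsingleton (Abelian.Ext (ModuleCat.of R (R ⧸ J)) N r)) :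
    IsZero ((localCohomology I r).obj N) := by
  refine IsZero.of_iso (isZero_colimit_of_forall_exists_map_eq_zero _ fun s => ?_)
    (colimitObjIsoColimitCompEvaluation (diagram (idealPowersDiagram I) r) N)
  obtain ⟨J, hJs, ⟨t, htJ⟩, hJ⟩ := h s.unop.unop
  -- the transition map from `Extʳ(R/Iˢ, N)` to `Extʳ(R/Iᵗ, N)` factors through `Extʳ(R/J, N) = 0`
  let f : s ⟶ op (op (max t s.unop.unop)) := (homOfLE (le_max_right t s.unop.unop)).op.op
  let a : ModuleCat.of R (R ⧸ I ^ max t s.unop.unop) ⟶ ModuleCat.of R (R ⧸ J) :=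
    ModuleCat.ofHom (Submodule.factor ((Ideal.pow_le_pow_right (le_max_left _ _)).trans htJ))
  let b : ModuleCat.of R (R ⧸ J) ⟶ ModuleCat.of R (R ⧸ I ^ s.unop.unop) :=
    ModuleCat.ofHom (Submodule.factor hJs)
  have hab : (ringModIdeals (idealPowersDiagram I)).map f.unop = a ≫ b :=
    ModuleCat.hom_ext (LinearMap.ext (Submodule.Quotient.mk_surjective _ |>.forall.2 fun _ => rfl))
  have map_f : (diagram (idealPowersDiagram I) r).map f =
      (Ext R (ModuleCat.{u} R) r).map b.op ≫ (Ext R (ModuleCat.{u} R) r).map a.op := by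
    rw [← Functor.map_comp, ← op_comp, ← hab]
    rfl
  refine ⟨_, f, ?_⟩
  change ((diagram (idealPowersDiagram I) r).map f).app N = 0
  rw [map_f, NatTrans.comp_app, (isZero_ext_obj_obj _ N r).eq_zero_of_tgt
    (((Ext R (ModuleCat.{u} R) r).map b.op).app N)]
  exact zero_comp

lemma hasProjectiveDimensionLT_quotient_ofList {rs : List R} {d : ℕ} {M : ModuleCat.{u} R}
    [HasProjectiveDimensionLT M d] (hrs : IsWeaklyRegular M rs) :
    HasProjectiveDimensionLT
      (ModuleCat.of R (M ⧸ Ideal.ofList rs • (⊤ : Submodule R M))) (d + rs.length) := by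
  induction rs generalizing M d with
  | nil =>
    have ofList_smul : Ideal.ofList ([] : List R) • (⊤ : Submodule R M) = ⊥ := by
      rw [Ideal.ofList_nil, Submodule.bot_smul]
    exact hasProjectiveDimensionLT_of_iso
      (Submodule.quotEquivOfEqBot _ ofList_smul).symm.toModuleIso d
  | cons x rs ih =>
    rw [isWeaklyRegular_cons_iff] at hrs
    have : HasProjectiveDimensionLT (ModuleCat.of R (QuotSMulTop x M)) (d + 1) :=
      hrs.1.smulShortComplex_shortExact.hasProjectiveDimensionLT_X₃ d ‹_›
        (hasProjectiveDimensionLT_of_ge M d (d + 1) d.le_succ)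
    have := ih (d := d + 1) (M := ModuleCat.of R (QuotSMulTop x M)) hrs.2
    rw [List.length_cons, add_comm rs.length, ← add_assoc]
    exact hasProjectiveDimensionLT_of_iso
      (Submodule.quotOfListConsSMulTopEquivQuotSMulTopInner M x rs).symm.toModuleIso _

lemma subsingleton_ext_quotient_ofList [IsNoetherianRing R] {rs : List R} (hrs : IsRegular R rs)
    {r : ℕ} (hr : r ≠ rs.length) :
    Subsingleton (Abelian.Ext (ModuleCat.of R (R ⧸ Ideal.ofList rs)) (ModuleCat.of R R) r) := by
  -- below the length of `rs` by the grade of the ideal, above it by projective dimension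
  rcases hr.lt_or_gt with hlt | hgt
  · refine ModuleCat.subsingleton_ext_of_exists_isRegular (Ideal.ofList rs) _ ?_ (ModuleCat.of R R)
      hrs.2.symm.lt_top rs (fun _ hx => Ideal.subset_span hx) hrs r hlt
    rw [Module.support_eq_zeroLocus, Ideal.annihilator_quotient]
  · have : HasProjectiveDimensionLT (ModuleCat.of R R) 1 :=
      projective_iff_hasProjectiveDimensionLT_one.1 inferInstance
    have := hasProjectiveDimensionLT_quotient_ofList (d := 1) (M := ModuleCat.of R R) hrs.1
    have : HasProjectiveDimensionLT (ModuleCat.of R (R ⧸ Ideal.ofList rs)) (1 + rs.length) :=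
      hasProjectiveDimensionLT_of_iso (Submodule.quotEquivOfEq
        (Ideal.ofList rs • (⊤ : Submodule R R)) (Ideal.ofList rs) (by simp)).toModuleIso _
    exact HasProjectiveDimensionLT.subsingleton _ (1 + rs.length) r (by omega) _

lemma ofList_map_pow_le (rs : List R) (t : ℕ) :
    Ideal.ofList (rs.map (· ^ t)) ≤ Ideal.ofList rs ^ t := by
  refine Ideal.span_le.2 fun x hx => ?_
  obtain ⟨y, hy, rfl⟩ := List.mem_map.1 hx
  exact Ideal.pow_mem_pow (show y ∈ Ideal.ofList rs from Ideal.subset_span hy) t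

lemma exists_ofList_pow_le_ofList_map_pow (rs : List R) (t : ℕ) :
    ∃ N, Ideal.ofList rs ^ N ≤ Ideal.ofList (rs.map (· ^ t)) :=
  Ideal.exists_pow_le_of_le_radical_of_fg
    (Ideal.span_le.2 fun _ hx => ⟨t, Ideal.subset_span (List.mem_map_of_mem hx)⟩)
    (Submodule.fg_span rs.finite_toSet)

lemma isZero_localCohomology_ofList [IsNoetherianRing R] {rs : List R} (hrs : IsRegular R rs)
    {r : ℕ} (hr : r ≠ rs.length) :
    IsZero ((localCohomology (Ideal.ofList rs) r).obj (ModuleCat.of R R)) := by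
  refine isZero_localCohomology_obj fun s => ⟨_,
    (ofList_map_pow_le rs (s + 1)).trans (Ideal.pow_le_pow_right s.le_succ),
    exists_ofList_pow_le_ofList_map_pow rs (s + 1), ?_⟩
  have ofList_ne_top : Ideal.ofList (rs.map (· ^ (s + 1))) ≠ ⊤ := fun h => hrs.2 <| by
    rw [smul_eq_mul, Ideal.mul_top, eq_comm, eq_top_iff, ← h]
    exact (ofList_map_pow_le rs (s + 1)).trans (Ideal.pow_le_self s.succ_ne_zero)
  refine subsingleton_ext_quotient_ofList ⟨isWeaklyRegular_map_pow hrs.1 (s + 1), ?_⟩ (by simpa)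
  rwa [smul_eq_mul, Ideal.mul_top, ne_comm]

end LocalCohomology

section Height

open RingTheory.Sequence IsLocalRing

variable {R : Type*} [CommRing R]

lemma height_ofList [IsNoetherianRing R] {rs : List R}
    [(Ideal.ofList rs).IsPrime] (hrs : IsWeaklyRegular R rs) :
    (Ideal.ofList rs).height = rs.length := by
  let 𝔮 := Ideal.ofList rs
  let S := Localization.AtPrime 𝔮
  have reg : IsRegular S (rs.map (algebraMap R S)) :=
    hrs.isRegular_of_isLocalization_of_mem S 𝔮 fun _ hx => Ideal.subset_span hx
  have ofList_eq : Ideal.ofList (rs.map (algebraMap R S)) = maximalIdeal S := by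
    rw [← Ideal.map_ofList, Localization.AtPrime.map_eq_maximalIdeal]
  have := ringKrullDim_add_length_eq_ringKrullDim_of_isRegular _ reg
  rw [ofList_eq, List.length_map, IsLocalization.AtPrime.ringKrullDim_eq_height 𝔮 S] at this
  have dim : ringKrullDim (S ⧸ maximalIdeal S) = 0 := ringKrullDim_eq_zero_of_field (ResidueField S)
  rw [dim, zero_add] at this
  exact_mod_cast this.symm

lemma idealHeight_eq_height (I : Ideal R) [hI : I.IsPrime] : idealHeight I = I.height := by
  have mem_iff {𝔭 : Ideal R} : 𝔭 ∈ I.minimalPrimes ↔ 𝔭 = I := by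
    rw [Ideal.minimalPrimes_eq_subsingleton_self, Set.mem_singleton_iff]
  rw [idealHeight, PrimeSpectrum.height_eq_orderHeight ⟨I, hI⟩]
  refine le_antisymm (iInf_le_of_le ⟨I, mem_iff.2 rfl⟩ le_rfl) (le_iInf fun ⟨𝔭, h𝔭⟩ => ?_)
  obtain rfl := mem_iff.1 h𝔭
  rfl

end Height

section LinearForms

open RingTheory.Sequence

lemma restrictTotalDegree_one_eq_span (σ R : Type*) [CommRing R] :
    restrictTotalDegree σ R 1 = Submodule.span R (insert 1 (Set.range X)) := by
  have setOf_sum_le_one : {d : σ →₀ ℕ | (d.sum fun _ e => e) ≤ 1} =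
      insert 0 (Set.range (Finsupp.single · 1)) := by
    ext d
    rw [Set.mem_ofPred_eq, Nat.le_one_iff_eq_zero_or_eq_one, Finsupp.sum_eq_one_iff]
    exact or_congr (Finsupp.degree_eq_zero_iff d) (exists_congr fun _ => eq_comm)
  rw [restrictTotalDegree, setOf_sum_le_one, restrictSupport_eq_span, Set.image_insert_eq,
    ← Set.range_comp]
  rfl

lemma isWeaklyRegular_map_X {σ R : Type*} [CommRing R] {l : List σ} (hl : l.Nodup) :
    IsWeaklyRegular (MvPolynomial σ R) (l.map (X : σ → MvPolynomial σ R)) := by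
  rw [isWeaklyRegular_iff]
  intro i hi
  have ofList_take : Ideal.ofList ((l.map (X : σ → MvPolynomial σ R)).take i) =
      Ideal.span (X '' {s | s ∈ l.take i}) := by
    rw [← List.map_take, Ideal.ofList]
    congr 1
    exact Set.ext fun _ => List.mem_map
  rw [isSMulRegular_quotient_iff_mem_of_smul_mem, ofList_take, smul_eq_mul, Ideal.mul_top,
    List.getElem_map]
  intro x hx
  rw [mem_ideal_span_X_image] at hx ⊢
  intro d hd
  rw [List.length_map] at hi
  obtain ⟨s, hs, hds⟩ := hx (Finsupp.single l[i] 1 + d) (by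
    rwa [mem_support_iff, smul_eq_mul, coeff_X_mul, ← mem_support_iff])
  have ne_s : l[i] ≠ s := by
    rintro rfl
    obtain ⟨i', hi', eq⟩ := List.mem_take_iff_getElem.1 hs
    have := hl.getElem_inj_iff.1 eq
    omega
  rw [Finsupp.add_apply, Finsupp.single_eq_of_ne' ne_s, zero_add] at hds
  exact ⟨s, hs, hds⟩

variable {σ k : Type*} [Field k]

open Classical in
/-- A basis of the space of polynomials of degree at most one that contains the constant `1`
consists, apart from `1`, of affine coordinates; this is the resulting change of variables. -/
noncomputable def affineChangeOfVariables {τ : Type*}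
    (B : Module.Basis τ k (restrictTotalDegree σ k 1)) {i₀ : τ}
    (hB : (B i₀ : MvPolynomial σ k) = 1) : MvPolynomial {i // i ≠ i₀} k ≃ₐ[k] MvPolynomial σ k :=
  let φ : MvPolynomial {i // i ≠ i₀} k →ₐ[k] MvPolynomial σ k := aeval fun i => (B i).1
  let μ : restrictTotalDegree σ k 1 →ₗ[k] MvPolynomial {i // i ≠ i₀} k :=
    B.constr k fun i => if hi : i = i₀ then 1 else X ⟨i, hi⟩
  have X_mem (s : σ) : X s ∈ restrictTotalDegree σ k 1 :=
    (mem_restrictTotalDegree _ _ _).2 (totalDegree_X s).le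
  let ψ : MvPolynomial σ k →ₐ[k] MvPolynomial {i // i ≠ i₀} k := aeval fun s => μ ⟨X s, X_mem s⟩
  have φ_μ : φ.toLinearMap ∘ₗ μ = Submodule.subtype _ := B.ext fun i => by
    by_cases hi : i = i₀
    · simp [μ, hi, hB]
    · simp [μ, φ, hi]
  have ψ_subtype : ψ.toLinearMap ∘ₗ Submodule.subtype _ = μ := by
    rw [Submodule.linearMap_eq_iff_of_eq_span _ _ (restrictTotalDegree_one_eq_span σ k)]
    rintro ⟨f, rfl | ⟨s, rfl⟩⟩
    · have one_eq : ⟨1, (hB ▸ (B i₀).2)⟩ = B i₀ := Subtype.ext hB.symm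
      rw [one_eq, LinearMap.comp_apply, Submodule.subtype_apply, hB]
      simp [μ]
    · simp [ψ]
  AlgEquiv.ofAlgHom φ ψ
    (algHom_ext fun s => by simpa [ψ] using LinearMap.congr_fun φ_μ ⟨X s, X_mem s⟩)
    (algHom_ext fun i => by simpa [φ, μ, i.2] using LinearMap.congr_fun ψ_subtype (B i))

lemma affineChangeOfVariables_X {τ : Type*} (B : Module.Basis τ k (restrictTotalDegree σ k 1))
    {i₀ : τ} (hB : (B i₀ : MvPolynomial σ k) = 1) (i : {i // i ≠ i₀}) :
    affineChangeOfVariables B hB (X i) = B i :=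
  aeval_X _ _

lemma isWeaklyRegular_map_of_linearIndependent {κ : Type*}
    {f : Option κ → restrictTotalDegree σ k 1} (hf : LinearIndependent k f)
    (h1 : (f none : MvPolynomial σ k) = 1) {l : List κ} (hl : l.Nodup) :
    IsWeaklyRegular (MvPolynomial σ k) (l.map fun i => (f (some i) : MvPolynomial σ k)) := by
  let B := Module.Basis.extend hf.linearIndepOn_id
  let index (o : Option κ) : hf.linearIndepOn_id.extend (Set.subset_univ _) :=
    ⟨f o, hf.linearIndepOn_id.subset_extend _ ⟨o, rfl⟩⟩
  have B_index (o : Option κ) : B (index o) = f o := Module.Basis.extend_apply_self _ _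
  have index_injective : Function.Injective index := fun o o' h =>
    hf.injective (congrArg Subtype.val h)
  let e := affineChangeOfVariables B (i₀ := index none) (by rw [B_index, h1])
  let coord (i : κ) : {x // x ≠ index none} := ⟨index (some i), by simp [index_injective.eq_iff]⟩
  have coord_injective : Function.Injective coord := fun i j h =>
    Option.some_injective κ (index_injective (congrArg Subtype.val h))
  have e_coord (i : κ) : e (X (coord i)) = f (some i) := by
    rw [affineChangeOfVariables_X, B_index]
  refine (AddEquiv.isWeaklyRegular_congr (e := e.toRingEquiv.toAddEquiv) ?_).1
    (isWeaklyRegular_map_X (R := k) (hl.map coord_injective))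
  rw [List.map_map, List.forall₂_map_left_iff, List.forall₂_map_right_iff, List.forall₂_same]
  intro i _ x
  rw [← e_coord]
  exact map_mul e _ _

end LinearForms

section LinearPrimes

open RingTheory.Sequence

lemma exists_linearIndependent_option_of_notMem {K E : Type*} [DivisionRing K] [AddCommGroup E]
    [Module K E] [FiniteDimensional K E] {V : Submodule K E} {v : E} (hv : v ∉ V) :
    ∃ f : Option (Fin (Module.finrank K V)) → E, LinearIndependent K f ∧ f none = v ∧
      Submodule.span K (Set.range fun i => f (some i)) = V := by
  let b := Module.finBasis K V
  have span_b : Submodule.span K (Set.range fun i => (b i : E)) = V := by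
    have h := congrArg (Submodule.map V.subtype) b.span_eq
    rwa [Submodule.map_span, ← Set.range_comp, Submodule.map_top, Submodule.range_subtype] at h
  refine ⟨fun o => o.elim v fun i => b i, linearIndependent_option.2 ⟨?_, ?_⟩, rfl, span_b⟩
  · exact b.linearIndependent.map' V.subtype V.ker_subtype
  · exact fun h => hv (span_b.le h)

variable {σ k : Type*} [Finite σ] [Field k]

lemma exists_isRegular_ofList_eq {I : Ideal (MvPolynomial σ k)} (hI : I ≠ ⊤)
    {S : Set (MvPolynomial σ k)} (hS : ∀ f ∈ S, f.totalDegree ≤ 1) (hIS : I = Ideal.span S) :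
    ∃ rs : List (MvPolynomial σ k), IsRegular (MvPolynomial σ k) rs ∧ Ideal.ofList rs = I := by
  let one : restrictTotalDegree σ k 1 := ⟨1, by simp [mem_restrictTotalDegree]⟩
  have one_notMem : one ∉ (I.restrictScalars k).comap (restrictTotalDegree σ k 1).subtype :=
    fun h => hI ((Ideal.eq_top_iff_one I).2 h)
  obtain ⟨f, hf, f_none, span_f⟩ := exists_linearIndependent_option_of_notMem one_notMem
  let rs := (List.finRange _).map fun i => (f (some i) : MvPolynomial σ k)
  have ofList_rs : Ideal.ofList rs = I := by
    refine le_antisymm (Ideal.span_le.2 fun x hx => ?_) (hIS.trans_le (Ideal.span_le.2 ?_))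
    · obtain ⟨i, -, rfl⟩ := List.mem_map.1 hx
      exact span_f.le (Submodule.subset_span ⟨i, rfl⟩)
    · intro g hg
      have span_le : Submodule.span k (Set.range fun i => f (some i)) ≤
          ((Ideal.ofList rs).restrictScalars k).comap (restrictTotalDegree σ k 1).subtype :=
        Submodule.span_le.2 (Set.range_subset_iff.2 fun i =>
          Ideal.subset_span (List.mem_map.2 ⟨i, List.mem_finRange i, rfl⟩))
      have g_mem : (⟨g, (mem_restrictTotalDegree _ _ _).2 (hS g hg)⟩ :
          restrictTotalDegree σ k 1) ∈ Submodule.span k (Set.range fun i => f (some i)) :=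
        span_f.ge (hIS.ge (Ideal.subset_span hg))
      exact span_le g_mem
  refine ⟨rs, ⟨isWeaklyRegular_map_of_linearIndependent hf ?_ (List.nodup_finRange _), ?_⟩,
    ofList_rs⟩
  · rw [f_none]
  · rwa [ofList_rs, smul_eq_mul, Ideal.mul_top, ne_comm]

end LinearPrimes

section ConcentratedDiagrams

lemma PDiagram.map_eq_zero_of_isAntichain {A P : Type} [CommRing A] [Preorder P]
    (D : PDiagram P A) {T : Set P} (hT : IsAntichain (· ≤ ·) T)
    (hD : ∀ p ∉ T, Subsingleton (D.obj p)) {p q : P} (h : p < q) : D.map h.le = 0 := by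
  by_cases hp : p ∈ T
  · have := hD q fun hq => hT hp hq h.ne h.le
    exact Subsingleton.elim _ _
  · have := hD p hp
    exact Subsingleton.elim _ _

/-- The Roos homology of a diagram concentrated on an antichain is a sum of copies of its values;
the value at `p` occurs once for each element of a basis of `H̃_{m-1}(K(>p); k)`. -/
noncomputable def roosHomologyEquivOfIsAntichain {k : Type*} {A P : Type} [Field k] [CommRing A]
    [Algebra k A] [Preorder P] [DecidableEq P] (D : PDiagram P A) {T : Set P}
    (hT : IsAntichain (· ≤ ·) T) (hD : ∀ p ∉ T, Subsingleton (D.obj p)) (m : ℕ)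
    {β : T → Type*} (b : ∀ p : T, Module.Basis (β p) k (simpHomology k k {q : P // p.1 < q} m)) :
    roosHomology D m ≃ₗ[A] ⨁ p : T, (β p →₀ D.obj p) :=
  letI (p : P) : Module k (D.obj p) := Module.compHom (D.obj p) (algebraMap k A)
  haveI (p : P) : IsScalarTower k A (D.obj p) := .of_algebraMap_smul fun _ _ => rfl
  haveI (p : P) (hp : p ∉ T) : Subsingleton (simpHomology A (D.obj p) {q : P // p < q} m) :=
    have := hD p hp
    inferInstance
  roosHomologyEquiv m (D.map_eq_zero_of_isAntichain hT hD) ≪≫ₗ directSumSubtypeEquiv A this ≪≫ₗ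
    DirectSum.congrLinearEquiv fun p => simpHomologyEquivFinsupp A (D.obj p) _ m (b p)

end ConcentratedDiagrams

section Arrangements

lemma isAntichain_setOf_height_eq {R P : Type*} [CommRing R] [PartialOrder P] {ι : P → Ideal R}
    (hι : StrictAnti ι) [∀ p, (ι p).IsPrime] (j : ℕ) :
    IsAntichain (· ≤ ·) {p | (ι p).height = j} := by
  intro p hp q hq hne hle
  have height_lt := Ideal.height_add_one_le_of_lt_of_isPrime (hι (hle.lt_of_ne hne))
  rw [Set.mem_ofPred_eq.mp hp, Set.mem_ofPred_eq.mp hq] at height_lt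
  exact absurd height_lt (by exact_mod_cast Nat.not_succ_le_self j)

lemma LC_subsingleton_of_height_ne {k : Type} [Field k] {n : ℕ}
    {I : Ideal (MvPolynomial (Fin n) k)} [hI : I.IsPrime] {S : Set (MvPolynomial (Fin n) k)}
    (hS : ∀ f ∈ S, f.totalDegree ≤ 1) (hIS : I = Ideal.span S) {r : ℕ} (hr : I.height ≠ r) :
    Subsingleton (LC k I r) := by
  obtain ⟨rs, hrs, rfl⟩ := exists_isRegular_ofList_eq hI.ne_top hS hIS
  rw [height_ofList hrs.1] at hr
  exact ModuleCat.subsingleton_of_isZero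
    (isZero_localCohomology_ofList hrs fun h => hr (by rw [h]))

theorem stmt_17_general {n : ℕ} {k : Type} [Field k] {P : Type} [PartialOrder P] [DecidableEq P]
    {ι : P → Ideal (MvPolynomial (Fin n) k)} (hι : StrictAnti ι)
    (hlin : ∀ p : P, (ι p).IsPrime ∧
      ∃ S : Set (MvPolynomial (Fin n) k), (∀ f ∈ S, f.totalDegree ≤ 1) ∧ ι p = Ideal.span S)
    {ht : P → ℕ} (hht : ∀ p : P, idealHeight (ι p) = (ht p : ℕ∞)) {j : ℕ}
    (D : PDiagram P (MvPolynomial (Fin n) k))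
    (eD : ∀ p : P, Nonempty (D.obj p ≃ₗ[MvPolynomial (Fin n) k] LC k (ι p) j)) (i : ℕ)
    {β : {p : P // ht p = j} → Type*}
    (b : ∀ p : {p : P // ht p = j},
      Module.Basis (β p) k (simpHomology k k {q : P // p.1 < q} i)) :
    Nonempty (roosHomology D i ≃ₗ[MvPolynomial (Fin n) k]
      ⨁ p : {p : P // ht p = j}, (β p →₀ LC k (ι p.1) j)) := by
  have isPrime (p : P) : (ι p).IsPrime := (hlin p).1
  have height_eq_iff (p : P) : (ι p).height = j ↔ ht p = j := by
    rw [← idealHeight_eq_height, hht, Nat.cast_inj]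
  have antichain : IsAntichain (· ≤ ·) {p | ht p = j} := by
    simpa only [height_eq_iff] using isAntichain_setOf_height_eq hι j
  have vanishing (p : P) (hp : ht p ≠ j) : Subsingleton (D.obj p) := by
    obtain ⟨S, hS, hIS⟩ := (hlin p).2
    have := LC_subsingleton_of_height_ne hS hIS (mt (height_eq_iff p).1 hp)
    exact (eD p).some.subsingleton
  exact ⟨roosHomologyEquivOfIsAntichain D antichain vanishing i b ≪≫ₗ
    DirectSum.congrLinearEquiv fun p => Finsupp.mapRange.linearEquiv (eD p).some⟩

end Arrangements

/-- For an arrangement `X ⊆ 𝔸ⁿ_k` of linear varieties with intersection poset `P`, the `i`-th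
left derived functor of the colimit over `P` of the diagram `H^j_{[*]}(R) : p ↦ H^j_{I_p}(R)`
(computed as Roos complex homology) is isomorphic to
`⊕_{h(p) = j} H^j_{I_p}(R)^{⊕ b_{i,p}}` with `b_{i,p} = dim_k H̃_{i-1}(K(>p); k)`. -/
theorem stmt_17 (n : ℕ) (k : Type) [Field k]
    (P : Type) [PartialOrder P] [Fintype P] [DecidableEq P]
    (ι : P → Ideal (MvPolynomial (Fin n) k))
    -- ordered by inclusion of the corresponding linear subvarieties
    (horder : ∀ p q : P, p ≤ q ↔ ι q ≤ ι p)
    -- each `I_p` is the (prime, radical) defining ideal of a linear subvariety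
    (hlin : ∀ p : P, (ι p).IsPrime ∧
      ∃ S : Set (MvPolynomial (Fin n) k),
        (∀ f ∈ S, f.totalDegree ≤ 1) ∧ ι p = Ideal.span S)
    -- `h(p)` is the codimension of the subvariety `X_p`, i.e. the height of `I_p`
    (ht : P → ℕ) (hht : ∀ p : P, idealHeight (ι p) = (ht p : ℕ∞))
    (j : ℕ)
    -- the diagram `H^j_{[*]}(R)` over `P`
    (D : PDiagram P (MvPolynomial (Fin n) k))
    (eD : ∀ p : P, Nonempty (D.obj p ≃ₗ[MvPolynomial (Fin n) k] LC k (ι p) j)) :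
    ∀ i : ℕ, Nonempty (roosHomology D i ≃ₗ[MvPolynomial (Fin n) k]
      ⨁ p : {p : P // ht p = j},
        (Fin (Module.finrank k (simpHomology k k {q : P // p.1 < q} i)) → LC k (ι p.1) j)) := by
  intro i
  have hι : StrictAnti ι := fun p q => (lt_iff_lt_of_le_iff_le' (horder q p) (horder p q)).1
  obtain ⟨e⟩ := stmt_17_general hι hlin hht D eD i fun p => Module.finBasis k _
  exact ⟨e ≪≫ₗ DirectSum.congrLinearEquiv fun _ =>
    Finsupp.linearEquivFunOnFinite (MvPolynomial (Fin n) k) _ _⟩
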